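/- Let {φ_j}_{j=0}^p ⊂ P_p and positive reals {λ_j}_{j=0}^p satisfy λ_j ∫_{−1}^{1} (I φ_j)'(I v)' ds = ∫_{−1}^{1} φ_j v ds for all v ∈ P_p, orthonormalized so that ∫_{−1}^{1} (I φ_j)'(I φ_k)' ds = δ_{jk}. Then for any symmetric positive definite matrices A and M, any τ > 0 and any p ≥ 0, every v ∈ V_p written as v(s) = Σ_{j=0}^p v_j φ_j(s) with coefficients v_j ∈ ℝⁿ, not all zero, satisfies 1/2 ≤ L(v,v) / H(v) ≤ 2, where L(v,v) := B(v, Pv) and H(v) := Σ_{j=0}^p v_jᵀ (M + (τ√λ_j/2) A) A⁻¹ (M + (τ√λ_j/2) A) v_j. -/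

import Mathlib

open Matrix Polynomial

/-- The `k`-th Legendre polynomial (Rodrigues' formula), normalized so that `L_k(1) = 1`. -/
noncomputable def legendre (k : ℕ) : Polynomial ℝ :=
  ((2 ^ k * (Nat.factorial k) : ℝ))⁻¹ •
    ((fun q => Polynomial.derivative q)^[k] ((Polynomial.X ^ 2 - 1) ^ k))

/-- Evaluation at `s` of the `ℝⁿ`-valued polynomial with coefficients `c` (degree ≤ p). -/
noncomputable def pev {n p : ℕ} (c : Fin (p + 1) → Fin n → ℝ) (s : ℝ) : Fin n → ℝ :=
  ∑ j : Fin (p + 1), s ^ (j : ℕ) • c j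

/-- Evaluation at `s` of the derivative of the `ℝⁿ`-valued polynomial with coefficients `c`. -/
noncomputable def pdev {n p : ℕ} (c : Fin (p + 1) → Fin n → ℝ) (s : ℝ) : Fin n → ℝ :=
  ∑ j : Fin (p + 1), ((((j : ℕ) : ℝ)) * s ^ ((j : ℕ) - 1)) • c j

/-- Evaluation at `s` of `(I v)'`, the derivative of the reconstruction `I v` of the
`ℝⁿ`-valued polynomial `v` with coefficients `c`, where the reconstruction operator
`I v := v − v(−1)·(−1)^p (L_p − L_{p+1})/2` acts coefficientwise. -/
noncomputable def reconD {n p : ℕ} (c : Fin (p + 1) → Fin n → ℝ) (s : ℝ) : Fin n → ℝ :=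
  pdev c s -
    ((-1 : ℝ) ^ p * (Polynomial.derivative (legendre p - legendre (p + 1))).eval s / 2) •
      pev c (-1)

/-- The DG bilinear form `B(u, ·)` applied to a test function `g : ℝ → ℝⁿ`:
`B(u,g) = ∫_{−1}^{1} (u'(s), g(s))_M ds + (u(−1), g(−1))_M + (τ/2) ∫_{−1}^{1} (u(s), g(s))_A ds`,
where `(u,v)_M := vᵀ M u`. -/
noncomputable def Bform {n p : ℕ} (M A : Matrix (Fin n) (Fin n) ℝ) (τ : ℝ)
    (c : Fin (p + 1) → Fin n → ℝ) (g : ℝ → Fin n → ℝ) : ℝ :=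
  (∫ s in (-1 : ℝ)..1, g s ⬝ᵥ (M *ᵥ pdev c s)) + g (-1) ⬝ᵥ (M *ᵥ pev c (-1)) +
    (τ / 2) * ∫ s in (-1 : ℝ)..1, g s ⬝ᵥ (A *ᵥ pev c s)

/-- The operator `P v := A⁻¹ M (I v)' + (τ/2) v`, evaluated at `s`. -/
noncomputable def Pop {n p : ℕ} (M A : Matrix (Fin n) (Fin n) ℝ) (τ : ℝ)
    (c : Fin (p + 1) → Fin n → ℝ) (s : ℝ) : Fin n → ℝ :=
  (A⁻¹ * M) *ᵥ reconD c s + (τ / 2) • pev c s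

/-- The scalar reconstruction operator `I : P_p → P_{p+1}`,
`I v := v − v(−1)·(−1)^p (L_p − L_{p+1})/2`. -/
noncomputable def recon (p : ℕ) (v : Polynomial ℝ) : Polynomial ℝ :=
  v - (v.eval (-1) * (-1 : ℝ) ^ p / 2) • (legendre p - legendre (p + 1))

/-- Evaluation at `s` of `v = Σ_j φ_j ⊗ w_j ∈ V_p`. -/
noncomputable def eEv {n p : ℕ} (φ : Fin (p + 1) → Polynomial ℝ)
    (w : Fin (p + 1) → Fin n → ℝ) (s : ℝ) : Fin n → ℝ :=
  ∑ j, (φ j).eval s • w j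

/-- Evaluation at `s` of `v' = Σ_j φ_j' ⊗ w_j`. -/
noncomputable def eDv {n p : ℕ} (φ : Fin (p + 1) → Polynomial ℝ)
    (w : Fin (p + 1) → Fin n → ℝ) (s : ℝ) : Fin n → ℝ :=
  ∑ j, (Polynomial.derivative (φ j)).eval s • w j

/-- Evaluation at `s` of `(I v)' = Σ_j (I φ_j)' ⊗ w_j` (the reconstruction acting
coefficientwise). -/
noncomputable def eIDv {n p : ℕ} (φ : Fin (p + 1) → Polynomial ℝ)
    (w : Fin (p + 1) → Fin n → ℝ) (s : ℝ) : Fin n → ℝ :=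
  ∑ j, (Polynomial.derivative (recon p (φ j))).eval s • w j

/-- `L(v,v) := B(v, P v)` for `v = Σ_j φ_j ⊗ w_j`, where
`P v := A⁻¹ M (I v)' + (τ/2) v` and
`B(u,v) := ∫_{−1}^{1} (u', v)_M ds + (u(−1), v(−1))_M + (τ/2) ∫_{−1}^{1} (u, v)_A ds`. -/
noncomputable def Lval {n p : ℕ} (M A : Matrix (Fin n) (Fin n) ℝ) (τ : ℝ)
    (φ : Fin (p + 1) → Polynomial ℝ) (w : Fin (p + 1) → Fin n → ℝ) : ℝ :=
  (∫ s in (-1 : ℝ)..1,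
      ((A⁻¹ * M) *ᵥ eIDv φ w s + (τ / 2) • eEv φ w s) ⬝ᵥ (M *ᵥ eDv φ w s)) +
    ((A⁻¹ * M) *ᵥ eIDv φ w (-1) + (τ / 2) • eEv φ w (-1)) ⬝ᵥ (M *ᵥ eEv φ w (-1)) +
    (τ / 2) * ∫ s in (-1 : ℝ)..1,
      ((A⁻¹ * M) *ᵥ eIDv φ w s + (τ / 2) • eEv φ w s) ⬝ᵥ (A *ᵥ eEv φ w s)

/-- The block-diagonal preconditioner quadratic form
`H(v) := Σ_j w_jᵀ (M + (τ√λ_j/2) A) A⁻¹ (M + (τ√λ_j/2) A) w_j`. -/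
noncomputable def Hval {n p : ℕ} (M A : Matrix (Fin n) (Fin n) ℝ) (τ : ℝ)
    (lam : Fin (p + 1) → ℝ) (w : Fin (p + 1) → Fin n → ℝ) : ℝ :=
  ∑ j, w j ⬝ᵥ (((M + (τ * Real.sqrt (lam j) / 2) • A) * A⁻¹ *
      (M + (τ * Real.sqrt (lam j) / 2) • A)) *ᵥ w j)

lemma eval_iter_aux (r : ℝ) (k i : ℕ) (q : Polynomial ℝ) :
    (Polynomial.derivative^[i] ((X - C r) ^ k * q)).eval r
      = (i.factorial : ℝ) * (if i < k then 0 else (taylor r q).coeff (i - k)) := by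
  have h1 := congrArg (fun f => f ((X - C r) ^ k * q)) (Polynomial.factorial_smul_hasseDeriv (R := ℝ) (k := i))
  simp only [LinearMap.smul_apply] at h1
  rw [← h1]
  have h2 : (taylor r ((X - C r) ^ k * q)) = taylor r q * X ^ k := by
    rw [taylor_mul, taylor_pow]
    simp [mul_comm]
  have h3 := Polynomial.taylor_coeff (r := r) (f := (X - C r) ^ k * q) i
  rw [h2, coeff_mul_X_pow'] at h3
  rw [eval_smul, ← h3]
  simp only [nsmul_eq_mul]
  by_cases h : i < k
  · simp [h]
  · simp [h, not_lt.mp h]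

lemma fact1 (k : ℕ) : ((X : Polynomial ℝ) ^ 2 - 1) ^ k = (X - C 1) ^ k * (X + 1) ^ k := by
  rw [← mul_pow]; congr 1; simp; ring

lemma fact2 (k : ℕ) : ((X : Polynomial ℝ) ^ 2 - 1) ^ k = (X - C (-1)) ^ k * (X - 1) ^ k := by
  rw [← mul_pow]; congr 1; simp; ring

lemma legendre_one (k : ℕ) : (legendre k).eval 1 = 1 := by
  have h := eval_iter_aux 1 k k ((X + 1) ^ k)
  rw [← fact1] at h
  simp only [lt_irrefl, if_false, Nat.sub_self, taylor_coeff_zero] at h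
  unfold legendre
  rw [eval_smul]
  erw [h]
  simp only [eval_pow, eval_add, eval_X, eval_one, smul_eq_mul]
  have : (k.factorial : ℝ) ≠ 0 := by positivity
  field_simp
  norm_num

lemma legendre_neg_one (k : ℕ) : (legendre k).eval (-1) = (-1) ^ k := by
  have h := eval_iter_aux (-1) k k ((X - 1) ^ k)
  rw [← fact2] at h
  simp only [lt_irrefl, if_false, Nat.sub_self, taylor_coeff_zero] at h
  unfold legendre
  rw [eval_smul]
  erw [h]
  simp only [eval_pow, eval_sub, eval_X, eval_one, smul_eq_mul]
  have : (k.factorial : ℝ) ≠ 0 := by positivity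
  field_simp
  rw [← mul_pow]
  norm_num

lemma pint (f : Polynomial ℝ) : IntervalIntegrable (fun s => f.eval s) MeasureTheory.volume (-1) 1 :=
  f.continuous.intervalIntegrable _ _

/-- Integration of a polynomial over `[-1,1]` as a linear functional. -/
noncomputable def Jint : Polynomial ℝ →ₗ[ℝ] ℝ where
  toFun f := ∫ s in (-1 : ℝ)..1, f.eval s
  map_add' f g := by
    simp only [eval_add]
    exact intervalIntegral.integral_add (pint f) (pint g)
  map_smul' c f := by
    simp [eval_smul]

lemma J_apply (f : Polynomial ℝ) : Jint f = ∫ s in (-1 : ℝ)..1, f.eval s := rfl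

lemma J_deriv (f : Polynomial ℝ) : Jint (derivative f) = f.eval 1 - f.eval (-1) := by
  rw [J_apply]
  exact intervalIntegral.integral_eq_sub_of_hasDerivAt (fun x _ => f.hasDerivAt x) (pint _)

lemma J_parts (f g : Polynomial ℝ) : Jint (derivative f * g) =
    f.eval 1 * g.eval 1 - f.eval (-1) * g.eval (-1) - Jint (f * derivative g) := by
  have h := J_deriv (f * g)
  rw [derivative_mul, map_add, eval_mul, eval_mul] at h
  linarith

lemma J_iter (k i : ℕ) (hi : i ≤ k) : ∀ g : Polynomial ℝ, derivative^[i] g = 0 →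
    Jint (derivative^[i] (((X : Polynomial ℝ) ^ 2 - 1) ^ k) * g) = 0 := by
  induction i with
  | zero => intro g hg; simp at hg; simp [hg]
  | succ i ih =>
    intro g hg
    have h1 := eval_iter_aux 1 k i ((X + 1) ^ k)
    have h2 := eval_iter_aux (-1) k i ((X - 1) ^ k)
    rw [← fact1] at h1
    rw [← fact2] at h2
    have hik : i < k := by omega
    simp only [hik, if_true, mul_zero] at h1 h2
    rw [Function.iterate_succ_apply', J_parts, h1, h2,
      ih (by omega) _ (by rwa [Function.iterate_succ_apply] at hg)]
    simp

lemma J_legendre (k : ℕ) (g : Polynomial ℝ) (hg : derivative^[k] g = 0) :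
    Jint (legendre k * g) = 0 := by
  unfold legendre
  rw [smul_mul_assoc, map_smul]
  erw [J_iter k k le_rfl g hg]
  simp

/-- the defining property of the reconstruction -/
lemma J_recon (p : ℕ) (v g : Polynomial ℝ) (hg : g.natDegree ≤ p) :
    Jint (g * derivative v) + g.eval (-1) * v.eval (-1) = Jint (g * derivative (recon p v)) := by
  have h0 : derivative^[p] (derivative g) = 0 := by
    rw [← Function.iterate_succ_apply]
    exact iterate_derivative_eq_zero (by omega)
  have h1 : derivative^[p+1] (derivative g) = 0 := by
    rw [Function.iterate_succ_apply', h0]; simp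
  have h2 := J_parts (legendre p - legendre (p + 1)) g
  rw [sub_mul (legendre p) _ (derivative g), map_sub Jint, J_legendre p _ h0, J_legendre (p+1) _ h1, eval_sub, eval_sub,
    legendre_one, legendre_one, legendre_neg_one, legendre_neg_one] at h2
  unfold recon
  rw [derivative_sub, derivative_smul, mul_sub, map_sub, mul_smul_comm, map_smul, mul_comm g
    (derivative (legendre p - legendre (p + 1))), h2]
  have h3 : ((-1 : ℝ) ^ p) * (-1) ^ p = 1 := by rw [← mul_pow]; simp
  rw [pow_succ, smul_eq_mul]
  linear_combination (-(g.eval (-1) * v.eval (-1))) * h3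

lemma legendre_natDegree (k : ℕ) : (legendre k).natDegree ≤ k := by
  unfold legendre
  refine (natDegree_smul_le _ _).trans ?_
  refine (natDegree_iterate_derivative _ k).trans ?_
  have : ((X : Polynomial ℝ) ^ 2 - 1).natDegree ≤ 2 := by compute_degree
  have := (natDegree_pow_le (p := (X : Polynomial ℝ) ^ 2 - 1) (n := k))
  have h : k * ((X : Polynomial ℝ) ^ 2 - 1).natDegree ≤ k * 2 := Nat.mul_le_mul_left _ ‹_›
  omega

lemma recon_deg (p : ℕ) (v : Polynomial ℝ) (hv : v.natDegree ≤ p) :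
    (derivative (recon p v)).natDegree ≤ p := by
  have : (recon p v).natDegree ≤ p + 1 := by
    unfold recon
    refine (natDegree_sub_le _ _).trans (max_le (by omega) ((natDegree_smul_le _ _).trans ?_))
    exact (natDegree_sub_le _ _).trans <| max_le ((legendre_natDegree p).trans (by omega)) (legendre_natDegree _)
  have := natDegree_derivative_le (recon p v)
  omega

lemma sum_dot {n m : ℕ} (N : Matrix (Fin n) (Fin n) ℝ) (a b : Fin m → ℝ)
    (w : Fin m → Fin n → ℝ) :
    (∑ j, a j • w j) ⬝ᵥ (N *ᵥ ∑ k, b k • w k)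
      = ∑ j, ∑ k, a j * b k * (w j ⬝ᵥ (N *ᵥ w k)) := by
  simp only [Matrix.mulVec_sum, Matrix.mulVec_smul, sum_dotProduct, dotProduct_sum,
    smul_dotProduct, dotProduct_smul, smul_eq_mul, mul_assoc, Finset.mul_sum]
  rw [Finset.sum_comm]
  refine Finset.sum_congr rfl fun j _ => Finset.sum_congr rfl fun k _ => by ring

lemma sum_dot_eval {n m : ℕ} (N : Matrix (Fin n) (Fin n) ℝ) (f g : Fin m → Polynomial ℝ)
    (w : Fin m → Fin n → ℝ) (s : ℝ) :
    (∑ j, (f j).eval s • w j) ⬝ᵥ (N *ᵥ ∑ k, (g k).eval s • w k)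
      = (∑ j, ∑ k, (w j ⬝ᵥ (N *ᵥ w k)) • (f j * g k)).eval s := by
  rw [sum_dot]
  simp only [eval_finsetSum, eval_smul, eval_mul, smul_eq_mul]
  refine Finset.sum_congr rfl fun j _ => Finset.sum_congr rfl fun k _ => by ring

section vec
variable {n : ℕ} {M A : Matrix (Fin n) (Fin n) ℝ}

lemma symm_dot (hM : M.PosDef) (x y : Fin n → ℝ) : x ⬝ᵥ (M *ᵥ y) = y ⬝ᵥ (M *ᵥ x) := by
  have h : Mᵀ = M := by simpa using hM.isHermitian.eq
  rw [dotProduct_mulVec, ← mulVec_transpose, h, dotProduct_comm]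

lemma nonneg_dot (hM : M.PosDef) (x : Fin n → ℝ) : 0 ≤ x ⬝ᵥ (M *ᵥ x) := by
  simpa using hM.posSemidef.dotProduct_mulVec_nonneg x

lemma AAinv (hA : A.PosDef) (x : Fin n → ℝ) : A *ᵥ (A⁻¹ *ᵥ x) = x := by
  rw [mulVec_mulVec, Matrix.mul_nonsing_inv _ ((Matrix.isUnit_iff_isUnit_det _).mp hA.isUnit),
    one_mulVec]

lemma AinvA (hA : A.PosDef) (x : Fin n → ℝ) : A⁻¹ *ᵥ (A *ᵥ x) = x := by
  rw [mulVec_mulVec, Matrix.nonsing_inv_mul _ ((Matrix.isUnit_iff_isUnit_det _).mp hA.isUnit),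
    one_mulVec]

lemma Ainv_left (hM : M.PosDef) (hA : A.PosDef) (x y : Fin n → ℝ) :
    ((A⁻¹ * M) *ᵥ x) ⬝ᵥ (M *ᵥ y) = x ⬝ᵥ ((M * A⁻¹ * M) *ᵥ y) := by
  rw [← mulVec_mulVec, dotProduct_comm, symm_dot hA.inv, dotProduct_comm, symm_dot hM,
    mulVec_mulVec, mulVec_mulVec]

lemma Pv_M (hM : M.PosDef) (hA : A.PosDef) (c : ℝ) (x y z : Fin n → ℝ) :
    ((A⁻¹ * M) *ᵥ x + c • y) ⬝ᵥ (M *ᵥ z)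
      = x ⬝ᵥ ((M * A⁻¹ * M) *ᵥ z) + c * (y ⬝ᵥ (M *ᵥ z)) := by
  rw [add_dotProduct, smul_dotProduct, Ainv_left hM hA, smul_eq_mul]

lemma Pv_A (hM : M.PosDef) (hA : A.PosDef) (c : ℝ) (x y z : Fin n → ℝ) :
    ((A⁻¹ * M) *ᵥ x + c • y) ⬝ᵥ (A *ᵥ z)
      = x ⬝ᵥ (M *ᵥ z) + c * (y ⬝ᵥ (A *ᵥ z)) := by
  rw [add_dotProduct, smul_dotProduct, symm_dot hA, ← mulVec_mulVec, AAinv hA, smul_eq_mul,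
    symm_dot hM]

lemma square_nonneg (hM : M.PosDef) (hA : A.PosDef) (c : ℝ) (x y : Fin n → ℝ) :
    2 * c * (x ⬝ᵥ (M *ᵥ y)) ≤ x ⬝ᵥ ((M * A⁻¹ * M) *ᵥ x) + c ^ 2 * (y ⬝ᵥ (A *ᵥ y)) := by
  have h := nonneg_dot hA ((A⁻¹ * M) *ᵥ x + (-c) • y)
  have e : A *ᵥ ((A⁻¹ * M) *ᵥ x) = M *ᵥ x := by rw [← mulVec_mulVec, AAinv hA]
  rw [mulVec_add, dotProduct_add, e, Pv_M hM hA, mulVec_smul, dotProduct_smul, Pv_A hM hA,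
    symm_dot hM y x] at h
  simp only [smul_eq_mul] at h
  linarith

lemma K_nonneg (hM : M.PosDef) (hA : A.PosDef) (x : Fin n → ℝ) :
    0 ≤ x ⬝ᵥ ((M * A⁻¹ * M) *ᵥ x) := by
  simpa using square_nonneg hM hA 0 x 0

lemma H_term (hA : A.PosDef) (c : ℝ) (x : Fin n → ℝ) :
    x ⬝ᵥ (((M + c • A) * A⁻¹ * (M + c • A)) *ᵥ x)
      = x ⬝ᵥ ((M * A⁻¹ * M) *ᵥ x) + 2 * c * (x ⬝ᵥ (M *ᵥ x)) + c ^ 2 * (x ⬝ᵥ (A *ᵥ x)) := by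
  have h1 := Matrix.mul_nonsing_inv _ ((Matrix.isUnit_iff_isUnit_det _).mp hA.isUnit)
  have h2 := Matrix.nonsing_inv_mul _ ((Matrix.isUnit_iff_isUnit_det _).mp hA.isUnit)
  have e : (M + c • A) * A⁻¹ * (M + c • A) = M * A⁻¹ * M + (2 * c) • M + c ^ 2 • A := by
    rw [add_mul, smul_mul_assoc, h1, add_mul, mul_add, mul_smul_comm, mul_assoc M A⁻¹ A, h2,
      mul_one, smul_mul_assoc, one_mul]
    module
  rw [e, add_mulVec, add_mulVec, smul_mulVec, smul_mulVec]
  simp only [dotProduct_add, dotProduct_smul, smul_eq_mul]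

end vec

/-- The scalar polynomial `s ↦ (Σ f_j(s) w_j)ᵀ N (Σ g_k(s) w_k)`. -/
noncomputable def Spol {n m : ℕ} (w : Fin m → Fin n → ℝ) (N : Matrix (Fin n) (Fin n) ℝ)
    (f g : Fin m → Polynomial ℝ) : Polynomial ℝ :=
  ∑ j, ∑ k, (w j ⬝ᵥ (N *ᵥ w k)) • (f j * g k)

lemma J_Spol {n m : ℕ} (w : Fin m → Fin n → ℝ) (N : Matrix (Fin n) (Fin n) ℝ)
    (f g : Fin m → Polynomial ℝ) :
    Jint (Spol w N f g) = ∑ j, ∑ k, (w j ⬝ᵥ (N *ᵥ w k)) * Jint (f j * g k) := by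
  simp only [Spol, map_sum, map_smul, smul_eq_mul]

lemma eval_Spol {n m : ℕ} (w : Fin m → Fin n → ℝ) (N : Matrix (Fin n) (Fin n) ℝ)
    (f g : Fin m → Polynomial ℝ) (s : ℝ) :
    (Spol w N f g).eval s = ∑ j, ∑ k, (w j ⬝ᵥ (N *ᵥ w k)) * ((f j).eval s * (g k).eval s) := by
  simp only [Spol, eval_finsetSum, eval_smul, eval_mul, smul_eq_mul]

lemma Lval_eq {n p : ℕ} {M A : Matrix (Fin n) (Fin n) ℝ} (hM : M.PosDef) (hA : A.PosDef) (τ : ℝ)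
    (φ : Fin (p + 1) → Polynomial ℝ) (hdeg : ∀ j, (φ j).natDegree ≤ p)
    (w : Fin (p + 1) → Fin n → ℝ) (D : Fin (p + 1) → Polynomial ℝ)
    (hD : D = fun j => derivative (recon p (φ j))) :
    Lval M A τ φ w = Jint (Spol w (M * A⁻¹ * M) D D) + τ / 2 * Jint (Spol w M φ D)
      + τ / 2 * (Jint (Spol w M D φ) + τ / 2 * Jint (Spol w A φ φ)) := by
  have key : ∀ (N : Matrix (Fin n) (Fin n) ℝ) (f : Fin (p + 1) → Polynomial ℝ),
      (∀ j, (f j).natDegree ≤ p) → Jint (Spol w N f D)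
        = Jint (Spol w N f fun j => derivative (φ j)) + (Spol w N f φ).eval (-1) := by
    intro N f hf
    rw [J_Spol, J_Spol, eval_Spol, ← Finset.sum_add_distrib]
    refine Finset.sum_congr rfl fun j _ => ?_
    rw [← Finset.sum_add_distrib]
    refine Finset.sum_congr rfl fun k _ => ?_
    rw [← mul_add, J_recon p _ _ (hf j), hD]
  rw [key _ D (fun j => by rw [hD]; exact recon_deg p _ (hdeg j)), key M φ hdeg]
  unfold Lval
  simp only [Pv_M hM hA, Pv_A hM hA]
  simp only [eEv, eDv, eIDv]
  simp only [sum_dot_eval _ _ _ w, ← Spol.eq_1]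
  have ji : ∀ (P Q : Polynomial ℝ) (c : ℝ),
      (∫ s in (-1 : ℝ)..1, (P.eval s + c * Q.eval s)) = Jint P + c * Jint Q := by
    intro P Q c
    rw [← smul_eq_mul, ← map_smul, ← map_add, J_apply]
    simp
  rw [ji, ji, ← hD]
  ring

/-- **Spectral equivalence of `L` and `H`.** Let `φ_j ∈ P_p` and `λ_j > 0` satisfy the
generalized eigenvalue problem `λ_j ∫_{−1}^{1} (I φ_j)'(I v)' ds = ∫_{−1}^{1} φ_j v ds` for
all `v ∈ P_p`, orthonormalized so that `∫_{−1}^{1} (I φ_j)'(I φ_k)' ds = δ_{jk}`. Then for any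
symmetric positive definite `A`, `M`, any `τ > 0` and any `p ≥ 0`, every nonzero
`v = Σ_j φ_j ⊗ w_j ∈ V_p` satisfies `1/2 ≤ L(v,v)/H(v) ≤ 2`. -/
theorem spectral_equivalence {n p : ℕ} (M A : Matrix (Fin n) (Fin n) ℝ)
    (hM : M.PosDef) (hA : A.PosDef) (τ : ℝ) (hτ : 0 < τ)
    (lam : Fin (p + 1) → ℝ) (φ : Fin (p + 1) → Polynomial ℝ)
    (hdeg : ∀ j, (φ j).natDegree ≤ p)
    (hpos : ∀ j, 0 < lam j)
    (horth : ∀ j k : Fin (p + 1),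
      (∫ s in (-1 : ℝ)..1,
          (Polynomial.derivative (recon p (φ j))).eval s *
            (Polynomial.derivative (recon p (φ k))).eval s)
        = if j = k then 1 else 0)
    (heig : ∀ j : Fin (p + 1), ∀ v : Polynomial ℝ, v.natDegree ≤ p →
      lam j * (∫ s in (-1 : ℝ)..1,
          (Polynomial.derivative (recon p (φ j))).eval s *
            (Polynomial.derivative (recon p v)).eval s)
        = ∫ s in (-1 : ℝ)..1, (φ j).eval s * v.eval s)
    (w : Fin (p + 1) → Fin n → ℝ) (hw : w ≠ 0) :
    (1 / 2 : ℝ) ≤ Lval M A τ φ w / Hval M A τ lam w ∧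
      Lval M A τ φ w / Hval M A τ lam w ≤ 2 := by
  obtain ⟨D, hD⟩ : ∃ D : Fin (p + 1) → Polynomial ℝ,
      D = fun j => derivative (recon p (φ j)) := ⟨_, rfl⟩
  have hDD : ∀ j k, Jint (D j * D k) = if j = k then 1 else 0 := by
    intro j k
    rw [← horth j k, J_apply, hD]
    simp only [eval_mul]
  have hφφ : ∀ j k, Jint (φ j * φ k) = if j = k then lam j else 0 := by
    intro j k
    have h := heig j (φ k) (hdeg k)
    rw [horth j k] at h
    rw [J_apply]
    simp only [eval_mul]
    rw [← h]
    simp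
  have hL := Lval_eq hM hA τ φ hdeg w D hD
  have hK : Jint (Spol w (M * A⁻¹ * M) D D) = ∑ j, w j ⬝ᵥ ((M * A⁻¹ * M) *ᵥ w j) := by
    rw [J_Spol]; simp [hDD]
  have hAA : Jint (Spol w A φ φ) = ∑ j, lam j * (w j ⬝ᵥ (A *ᵥ w j)) := by
    rw [J_Spol]; simp [hφφ, mul_comm]
  have hsymm : Jint (Spol w M φ D) = Jint (Spol w M D φ) := by
    rw [J_Spol, J_Spol, Finset.sum_comm]
    refine Finset.sum_congr rfl fun j _ => Finset.sum_congr rfl fun k _ => ?_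
    rw [symm_dot hM, mul_comm (φ k)]
  -- the cross term is a sum of boundary terms
  have hcross : 2 * Jint (Spol w M φ D) = (Spol w M φ φ).eval 1 + (Spol w M φ φ).eval (-1) := by
    have h : Jint (Spol w M φ D) + Jint (Spol w M D φ)
        = (Spol w M φ φ).eval 1 + (Spol w M φ φ).eval (-1) := by
      rw [J_Spol, J_Spol, eval_Spol, eval_Spol, ← Finset.sum_add_distrib,
        ← Finset.sum_add_distrib]
      refine Finset.sum_congr rfl fun j _ => ?_
      rw [← Finset.sum_add_distrib, ← Finset.sum_add_distrib]
      refine Finset.sum_congr rfl fun k _ => ?_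
      rw [← mul_add, ← mul_add, mul_comm (D j), hD]
      rw [← J_recon p _ _ (hdeg j), ← J_recon p _ _ (hdeg k)]
      have := J_parts (φ j) (φ k)
      rw [mul_comm (derivative (φ j))] at this
      rw [this]
      ring
    rw [← h, ← hsymm]; ring
  have hev : ∀ s, 0 ≤ (Spol w M φ φ).eval s := by
    intro s
    have h := sum_dot_eval M φ φ w s
    rw [← Spol.eq_1] at h
    rw [← h]
    exact nonneg_dot hM _
  have hC0 : 0 ≤ Jint (Spol w M φ D) := by linarith [hev 1, hev (-1)]
  -- Young's inequality for the cross term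
  have hC1 : τ * Jint (Spol w M D φ) ≤ Jint (Spol w (M * A⁻¹ * M) D D)
      + (τ / 2) ^ 2 * Jint (Spol w A φ φ) := by
    have e1 : τ * Jint (Spol w M D φ) = Jint (τ • Spol w M D φ) := by
      rw [map_smul, smul_eq_mul]
    have e2 : Jint (Spol w (M * A⁻¹ * M) D D) + (τ / 2) ^ 2 * Jint (Spol w A φ φ)
        = Jint (Spol w (M * A⁻¹ * M) D D + (τ / 2) ^ 2 • Spol w A φ φ) := by
      rw [map_add, map_smul, smul_eq_mul]
    rw [e1, e2, J_apply, J_apply]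
    refine intervalIntegral.integral_mono_on (by norm_num) (pint _) (pint _) fun s _ => ?_
    have h := square_nonneg hM hA (τ / 2) (∑ j, (D j).eval s • w j) (∑ j, (φ j).eval s • w j)
    simp only [sum_dot_eval, ← Spol.eq_1] at h
    simp only [eval_add, eval_smul, smul_eq_mul]
    linarith
  set Xv := Jint (Spol w (M * A⁻¹ * M) D D) + (τ / 2) ^ 2 * Jint (Spol w A φ φ) with hX
  have hX' : Xv = ∑ j, (w j ⬝ᵥ ((M * A⁻¹ * M) *ᵥ w j)
      + (τ * Real.sqrt (lam j) / 2) ^ 2 * (w j ⬝ᵥ (A *ᵥ w j))) := by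
    rw [hX, hK, hAA, Finset.mul_sum, ← Finset.sum_add_distrib]
    refine Finset.sum_congr rfl fun j _ => ?_
    have := Real.sq_sqrt (hpos j).le
    linear_combination (-(τ / 2) ^ 2 * (w j ⬝ᵥ (A *ᵥ w j))) * this
  have hXpos : 0 < Xv := by
    rw [hX']
    obtain ⟨i, hi⟩ := Function.ne_iff.mp hw
    refine Finset.sum_pos' (fun j _ => ?_) ⟨i, Finset.mem_univ _, ?_⟩
    · exact add_nonneg (K_nonneg hM hA _) (mul_nonneg (sq_nonneg _) (nonneg_dot hA _))
    · have h1 : 0 < w i ⬝ᵥ (A *ᵥ w i) := by simpa using hA.dotProduct_mulVec_pos hi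
      have h2 := Real.sqrt_pos.mpr (hpos i)
      have h3 := K_nonneg hM hA (w i)
      positivity
  have hH1 : Xv ≤ Hval M A τ lam w := by
    rw [hX']
    refine Finset.sum_le_sum fun j _ => ?_
    rw [H_term hA]
    have : 0 ≤ 2 * (τ * Real.sqrt (lam j) / 2) * (w j ⬝ᵥ (M *ᵥ w j)) :=
      mul_nonneg (by positivity) (nonneg_dot hM _)
    linarith
  have hH2 : Hval M A τ lam w ≤ 2 * Xv := by
    rw [hX', Finset.mul_sum]
    refine Finset.sum_le_sum fun j _ => ?_
    rw [H_term hA]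
    linarith [square_nonneg hM hA (τ * Real.sqrt (lam j) / 2) (w j) (w j)]
  have hLX : Lval M A τ φ w = Xv + τ * Jint (Spol w M φ D) := by
    rw [hL, hX, ← hsymm]; ring
  have hτC : 0 ≤ τ * Jint (Spol w M φ D) := mul_nonneg hτ.le hC0
  rw [← hsymm] at hC1
  have hHpos : 0 < Hval M A τ lam w := by linarith
  rw [le_div_iff₀ hHpos, div_le_iff₀ hHpos]
  constructor <;> linarith
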